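/- Let γ > 1 be a real number, let n₀, m₀ be coprime positive integers, and set α = γ^{−n₀}, β = γ^{−m₀}; assume 0 < α, β < 1/2 and τ(C_α)·τ(C_β) < 1. Then C_α + C_β = [0, 2] if and only if there exists an integer n with −m₀ + 1 ≤ n ≤ n₀ and log((1−2β)/α)/log γ ≤ n ≤ 1 − log((1−2α)/β)/log γ. -/

import Mathlib

/-!
Write `C_a` for `middleCantor a`. A point of `C_a` below `a ^ k * (1 - a)` is at most `a ^ (k + 1)`.

*Necessity.* If `β ^ (l + 1) < α ^ k * (1 - 2 * α)` and `α ^ (k + 1) < β ^ l * (1 - 2 * β)`, then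
`C_α + C_β` misses every point just to the right of `α ^ (k + 1) + β ^ (l + 1)`
(`no_double_gap`). With `j = n₀ * k - m₀ * l` these two inequalities say that `γ ^ j` lies strictly
between `α / (1 - 2 * β)` and `(1 - 2 * α) / β`. Since `n₀` and `m₀` are coprime, every integer is
such a `j` (`exists_nat_combination`), so if the sum is `[0, 2]` then no power of `γ` lies in that
open interval. The `n` sought is minus the largest `j` with `γ ^ j ≤ α / (1 - 2 * β)`.

*Sufficiency.* Consider `C_α + γ ^ j • C_β` for `1 - n - m₀ ≤ j ≤ n₀ - n`. If `j ≤ -n`, splitting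
`C_α` into its two halves reduces `j` to `j + n₀`; if `j ≥ 1 - n`, splitting `C_β` reduces `j` to
`j - m₀`. In both cases the new exponent is in the same range, and the hulls of the two halves
cover the hull `[0, 1 + γ ^ j]`. The squared distance to a point of the hull, divided by `γ ^ j`,
shrinks by the factor `α` or `β` at each step (`exists_approx`), so the sum is dense in its hull;
it is also compact.
-/

open Set MeasureTheory

/-- The middle Cantor set `C_a`, for `0 < a < 1/2`:
`C_a = { (1-a) * ∑ εₖ aᵏ : εₖ ∈ {0,1} }`. -/
noncomputable def middleCantor (a : ℝ) : Set ℝ :=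
  {x : ℝ | ∃ ε : ℕ → Bool, x = (1 - a) * ∑' k : ℕ, (if ε k then a ^ k else 0)}

/-- The arithmetic difference `C_a - l · C_b`. -/
noncomputable def diffSet (a b l : ℝ) : Set ℝ :=
  {z : ℝ | ∃ x ∈ middleCantor a, ∃ y ∈ middleCantor b, z = x - l * y}


/-- The arithmetic sum `C_a + C_b`. -/
noncomputable def sumSet (a b : ℝ) : Set ℝ :=
  {z : ℝ | ∃ x ∈ middleCantor a, ∃ y ∈ middleCantor b, z = x + y}

section Cantor

variable {a : ℝ}

lemma summable_digits (h0 : 0 < a) (h1 : a < 1 / 2) (ε : ℕ → Bool) :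
    Summable fun k : ℕ => (if ε k then a ^ k else 0 : ℝ) := by
  refine Summable.of_nonneg_of_le (fun k => ?_) (fun k => ?_)
    (summable_geometric_of_lt_one h0.le (by linarith))
  · split_ifs <;> positivity
  · split_ifs
    · exact le_rfl
    · positivity

lemma tsum_digits_succ (h0 : 0 < a) (h1 : a < 1 / 2) (ε : ℕ → Bool) :
    ∑' k : ℕ, (if ε k then a ^ k else 0 : ℝ) =
      (if ε 0 then 1 else 0) + a * ∑' k : ℕ, (if ε (k + 1) then a ^ k else 0 : ℝ) := by
  rw [(summable_digits h0 h1 ε).tsum_eq_zero_add, ← tsum_mul_left]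
  simp only [pow_zero]
  congr 1
  refine tsum_congr fun k => ?_
  split_ifs
  · ring
  · simp

lemma middleCantor_subset (h0 : 0 < a) (h1 : a < 1 / 2) {x : ℝ} (hx : x ∈ middleCantor a) :
    0 ≤ x ∧ x ≤ 1 := by
  obtain ⟨ε, rfl⟩ := hx
  have ha : 0 < 1 - a := by linarith
  constructor
  · refine mul_nonneg ha.le (tsum_nonneg fun k => ?_)
    split_ifs <;> positivity
  · have h : ∑' k : ℕ, (if ε k then a ^ k else 0 : ℝ) ≤ (1 - a)⁻¹ := by
      rw [← tsum_geometric_of_lt_one h0.le (by linarith)]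
      refine (summable_digits h0 h1 ε).tsum_le_tsum (fun k => ?_)
        (summable_geometric_of_lt_one h0.le (by linarith))
      split_ifs
      · exact le_rfl
      · positivity
    calc _ ≤ (1 - a) * (1 - a)⁻¹ := mul_le_mul_of_nonneg_left h ha.le
      _ = 1 := mul_inv_cancel₀ ha.ne'

lemma zero_mem_middleCantor : (0 : ℝ) ∈ middleCantor a :=
  ⟨fun _ => false, by simp⟩

lemma middleCantor_left (h0 : 0 < a) (h1 : a < 1 / 2) {x : ℝ} (hx : x ∈ middleCantor a) :
    a * x ∈ middleCantor a := by
  obtain ⟨ε, rfl⟩ := hx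
  refine ⟨fun k => Nat.casesOn k false ε, ?_⟩
  rw [tsum_digits_succ h0 h1 (fun k => Nat.casesOn k false ε)]
  change _ = (1 - a) * ((if false = true then 1 else 0) + a * ∑' k : ℕ, (if ε k then a ^ k else 0))
  simp only [Bool.false_eq_true, if_false]
  ring

lemma middleCantor_right (h0 : 0 < a) (h1 : a < 1 / 2) {x : ℝ} (hx : x ∈ middleCantor a) :
    a * x + (1 - a) ∈ middleCantor a := by
  obtain ⟨ε, rfl⟩ := hx
  refine ⟨fun k => Nat.casesOn k true ε, ?_⟩
  rw [tsum_digits_succ h0 h1 (fun k => Nat.casesOn k true ε)]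
  change _ = (1 - a) * ((if true = true then 1 else 0) + a * ∑' k : ℕ, (if ε k then a ^ k else 0))
  simp only [if_true]
  ring

lemma middleCantor_split (h0 : 0 < a) (h1 : a < 1 / 2) {x : ℝ} (hx : x ∈ middleCantor a) :
    ∃ y ∈ middleCantor a, x = a * y ∨ x = a * y + (1 - a) := by
  obtain ⟨ε, rfl⟩ := hx
  refine ⟨_, ⟨fun k => ε (k + 1), rfl⟩, ?_⟩
  rw [tsum_digits_succ h0 h1]
  cases ε 0
  · left
    simp only [Bool.false_eq_true, if_false]
    ring
  · right
    simp only [if_true]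
    ring

lemma middleCantor_gap (h0 : 0 < a) (h1 : a < 1 / 2) (k : ℕ) :
    ∀ {x : ℝ}, x ∈ middleCantor a → x < a ^ k * (1 - a) → x ≤ a ^ (k + 1) := by
  have ha : 0 < 1 - a := by linarith
  induction k with
  | zero =>
    intro x hx hlt
    obtain ⟨y, hy, h | h⟩ := middleCantor_split h0 h1 hx
    · have := middleCantor_subset h0 h1 hy
      simp only [zero_add, pow_one]
      nlinarith
    · have := middleCantor_subset h0 h1 hy
      simp only [pow_zero] at hlt
      nlinarith
  | succ k ih =>
    intro x hx hlt
    obtain ⟨y, hy, h | h⟩ := middleCantor_split h0 h1 hx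
    · have h2 : a * y < a * (a ^ k * (1 - a)) := by
        rw [← h]
        calc x < _ := hlt
          _ = _ := by ring
      have h3 := ih hy (lt_of_mul_lt_mul_left h2 h0.le)
      rw [h, pow_succ' a (k + 1)]
      exact mul_le_mul_of_nonneg_left h3 h0.le
    · have := middleCantor_subset h0 h1 hy
      have h4 : a ^ (k + 1) ≤ 1 := pow_le_one₀ h0.le (by linarith)
      nlinarith

lemma isCompact_middleCantor (h0 : 0 < a) (h1 : a < 1 / 2) : IsCompact (middleCantor a) := by
  have hc : Continuous fun ε : ℕ → Bool =>
      (1 - a) * ∑' k : ℕ, (if ε k then a ^ k else 0 : ℝ) := by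
    refine continuous_const.mul (continuous_tsum (u := fun k => a ^ k) (fun k => ?_)
      (summable_geometric_of_lt_one h0.le (by linarith)) (fun k ε => ?_))
    · exact (continuous_of_discreteTopology (f := fun b : Bool => (if b then a ^ k else 0 : ℝ))).comp
        (continuous_apply k)
    · split_ifs
      · rw [Real.norm_of_nonneg (by positivity)]
      · simpa using pow_nonneg h0.le k
  have : middleCantor a = Set.range fun ε : ℕ → Bool =>
      (1 - a) * ∑' k : ℕ, (if ε k then a ^ k else 0 : ℝ) := by
    ext x
    constructor
    · rintro ⟨ε, hε⟩
      exact ⟨ε, hε.symm⟩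
    · rintro ⟨ε, hε⟩
      exact ⟨ε, hε.symm⟩
  rw [this]
  exact isCompact_range hc

end Cantor

lemma isClosed_sumSet {a b : ℝ} (ha0 : 0 < a) (ha : a < 1 / 2) (hb0 : 0 < b) (hb : b < 1 / 2) :
    IsClosed (sumSet a b) := by
  have h : sumSet a b = (fun p : ℝ × ℝ => p.1 + p.2) '' (middleCantor a ×ˢ middleCantor b) := by
    ext z
    constructor
    · rintro ⟨x, hx, y, hy, rfl⟩
      exact ⟨(x, y), ⟨hx, hy⟩, rfl⟩
    · rintro ⟨⟨x, y⟩, ⟨hx, hy⟩, rfl⟩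
      exact ⟨x, hx, y, hy, rfl⟩
  rw [h]
  exact (((isCompact_middleCantor ha0 ha).prod (isCompact_middleCantor hb0 hb)).image
    (by fun_prop)).isClosed

lemma sumSet_subset {a b : ℝ} (ha0 : 0 < a) (ha : a < 1 / 2) (hb0 : 0 < b) (hb : b < 1 / 2) :
    sumSet a b ⊆ Set.Icc 0 2 := by
  rintro z ⟨x, hx, y, hy, rfl⟩
  have h1 := middleCantor_subset ha0 ha hx
  have h2 := middleCantor_subset hb0 hb hy
  constructor <;> linarith

/-- If both conditions failed for some `k, l`, the sum would omit the points slightly to the right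
of `a ^ (k + 1) + b ^ (l + 1)`. -/
lemma no_double_gap {a b : ℝ} (ha0 : 0 < a) (ha : a < 1 / 2) (hb0 : 0 < b) (hb : b < 1 / 2)
    (hfull : sumSet a b = Set.Icc 0 2) (k l : ℕ) :
    a ^ k * (1 - 2 * a) ≤ b ^ (l + 1) ∨ b ^ l * (1 - 2 * b) ≤ a ^ (k + 1) := by
  by_contra! hcon
  obtain ⟨h1, h2⟩ := hcon
  have hpos : 0 < a ^ (k + 1) + b ^ (l + 1) := by positivity
  have hlt : a ^ (k + 1) + b ^ (l + 1) < min (a ^ k * (1 - a)) (b ^ l * (1 - b)) := by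
    rw [pow_succ, pow_succ] at *
    exact lt_min (by nlinarith) (by nlinarith)
  obtain ⟨t, ht1, ht2⟩ := exists_between hlt
  obtain ⟨hta, htb⟩ := lt_min_iff.1 ht2
  have hak : a ^ k ≤ 1 := pow_le_one₀ ha0.le (by linarith)
  have ht : t ∈ sumSet a b := by
    rw [hfull]
    constructor
    · linarith
    · nlinarith [pow_pos ha0 k]
  obtain ⟨x, hx, y, hy, rfl⟩ := ht
  have hx0 := middleCantor_subset ha0 ha hx
  have hy0 := middleCantor_subset hb0 hb hy
  have := middleCantor_gap ha0 ha k hx (by linarith)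
  have := middleCantor_gap hb0 hb l hy (by linarith)
  linarith

lemma exists_nat_combination {p q : ℕ} (hp : 0 < p) (hq : 0 < q) (h : Nat.Coprime p q) (j : ℤ) :
    ∃ k l : ℕ, j = p * k - q * l := by
  have hb := Nat.gcd_eq_gcd_ab p q
  rw [Nat.coprime_iff_gcd_eq_one.1 h] at hb
  set u := p.gcdA q
  set v := p.gcdB q
  -- Adding a large multiple of `(q, p)` to a Bézout solution makes both coefficients nonnegative.
  set s : ℤ := |j * u| + |j * v|
  have hp' : (1 : ℤ) ≤ p := by exact_mod_cast hp
  have hq' : (1 : ℤ) ≤ q := by exact_mod_cast hq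
  have hs : 0 ≤ s := by positivity
  have h1 : 0 ≤ j * u + q * s := by
    have := neg_abs_le (j * u)
    have := abs_nonneg (j * v)
    have : s ≤ q * s := by nlinarith
    simp only [s] at *
    linarith
  have h2 : 0 ≤ -(j * v) + p * s := by
    have := le_abs_self (j * v)
    have := abs_nonneg (j * u)
    have : s ≤ p * s := by nlinarith
    simp only [s] at *
    linarith
  refine ⟨(j * u + q * s).toNat, (-(j * v) + p * s).toNat, ?_⟩
  rw [Int.toNat_of_nonneg h1, Int.toNat_of_nonneg h2]
  push_cast at hb
  linear_combination j * hb

/-- Approximation of the hull of `C_α + γ ^ j • C_β`. Dividing the squared error by `γ ^ j` makes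
both kinds of subdivision contract, so one can induct on the number `N` of subdivisions. -/
lemma exists_approx {γ α β : ℝ} {n₀ m₀ : ℕ} (hγ : 1 < γ)
    (hαdef : α = γ ^ (-(n₀ : ℤ))) (hβdef : β = γ ^ (-(m₀ : ℤ)))
    (hα0 : 0 < α) (hα : α < 1 / 2) (hβ0 : 0 < β) (hβ : β < 1 / 2) {n : ℤ}
    (h1 : γ ^ (-n) * (1 - 2 * β) ≤ α) (h2 : 1 - 2 * α ≤ γ ^ (1 - n) * β) (N : ℕ) :
    ∀ j : ℤ, 1 - n - m₀ ≤ j → j ≤ n₀ - n → ∀ t : ℝ, 0 ≤ t → t ≤ 1 + γ ^ j →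
      ∃ x ∈ middleCantor α, ∃ y ∈ middleCantor β,
        (t - (x + γ ^ j * y)) ^ 2 ≤
          (1 + 1 / (1 - 2 * β)) ^ 2 / (1 - 2 * α) * γ ^ j * (1 / 2) ^ N := by
  have hγ0 : 0 < γ := by linarith
  have hα' : 0 < 1 - 2 * α := by linarith
  have hβ' : 0 < 1 - 2 * β := by linarith
  have hlow : ∀ j : ℤ, 1 - n - m₀ ≤ j → 1 - 2 * α ≤ γ ^ j := fun j hj => by
    calc 1 - 2 * α ≤ γ ^ (1 - n) * β := h2
      _ = γ ^ (1 - n - m₀) := by rw [hβdef, ← zpow_add₀ hγ0.ne']; rfl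
      _ ≤ γ ^ j := zpow_le_zpow_right₀ hγ.le hj
  have hup : ∀ j : ℤ, j ≤ n₀ - n → γ ^ j * (1 - 2 * β) ≤ 1 := fun j hj => by
    have e : γ ^ ((n₀ : ℤ) - n) * α = γ ^ (-n) := by
      rw [hαdef, ← zpow_add₀ hγ0.ne']; congr 1; ring
    have h3 : γ ^ j ≤ γ ^ ((n₀ : ℤ) - n) := zpow_le_zpow_right₀ hγ.le hj
    have h4 : γ ^ ((n₀ : ℤ) - n) * (1 - 2 * β) * α ≤ 1 * α := by
      calc _ = γ ^ (-n) * (1 - 2 * β) := by rw [← e]; ring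
        _ ≤ _ := by linarith
    have h5 := le_of_mul_le_mul_right h4 hα0
    nlinarith
  induction N with
  | zero =>
    intro j hj1 hj2 t ht0 ht1
    refine ⟨0, zero_mem_middleCantor, 0, zero_mem_middleCantor, ?_⟩
    have hu : γ ^ j ≤ 1 / (1 - 2 * β) := by rw [le_div_iff₀ hβ']; exact hup j hj2
    have hl := hlow j hj1
    have h3 : (t - (0 + γ ^ j * 0)) ^ 2 ≤ (1 + 1 / (1 - 2 * β)) ^ 2 := by
      simp only [mul_zero, add_zero, sub_zero]
      exact pow_le_pow_left₀ ht0 (by linarith) 2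
    refine h3.trans ?_
    rw [pow_zero, mul_one, div_mul_eq_mul_div, le_div_iff₀ hα']
    exact mul_le_mul_of_nonneg_left hl (by positivity)
  | succ N ih =>
    intro j hj1 hj2 t ht0 ht1
    have hl := hlow j hj1
    have hu := hup j hj2
    have hgj : 0 < γ ^ j := zpow_pos hγ0 j
    set M := (1 + 1 / (1 - 2 * β)) ^ 2 / (1 - 2 * α) with hM
    have hM0 : 0 < M := by positivity
    have hP : 0 < M * γ ^ j * (1 / 2) ^ N := by positivity
    by_cases hj : j ≤ -n
    · have e : γ ^ (j + n₀) * α = γ ^ j := by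
        rw [hαdef, ← zpow_add₀ hγ0.ne']; congr 1; ring
      have key : ∀ c : ℝ, (∀ x ∈ middleCantor α, α * x + c ∈ middleCantor α) →
          c ≤ t → t ≤ c + α + γ ^ j → ∃ x ∈ middleCantor α, ∃ y ∈ middleCantor β,
          (t - (x + γ ^ j * y)) ^ 2 ≤ M * γ ^ j * (1 / 2) ^ (N + 1) := by
        intro c hc hct htc
        obtain ⟨x, hx, y, hy, hxy⟩ := ih (j + n₀) (by omega) (by omega) ((t - c) / α)
          (div_nonneg (by linarith) hα0.le) (by
            rw [div_le_iff₀ hα0, add_mul, e]; linarith)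
        refine ⟨_, hc x hx, y, hy, ?_⟩
        have e2 : t - (α * x + c + γ ^ j * y) =
            α * ((t - c) / α - (x + γ ^ (j + n₀) * y)) := by
          rw [← e]; field_simp; ring
        calc (t - (α * x + c + γ ^ j * y)) ^ 2
            = α ^ 2 * ((t - c) / α - (x + γ ^ (j + n₀) * y)) ^ 2 := by rw [e2]; ring
          _ ≤ α ^ 2 * (M * γ ^ (j + n₀) * (1 / 2) ^ N) :=
              mul_le_mul_of_nonneg_left hxy (by positivity)
          _ = α * (M * γ ^ j * (1 / 2) ^ N) := by rw [← e]; ring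
          _ ≤ 1 / 2 * (M * γ ^ j * (1 / 2) ^ N) := mul_le_mul_of_nonneg_right hα.le hP.le
          _ = _ := by ring
      rcases le_total t (α + γ ^ j) with h | h
      · exact key 0 (fun x hx => by simpa using middleCantor_left hα0 hα hx) ht0 (by linarith)
      · exact key (1 - α) (fun x hx => middleCantor_right hα0 hα hx) (by linarith) (by linarith)
    · have e : γ ^ (j - m₀) = γ ^ j * β := by
        rw [hβdef, ← zpow_add₀ hγ0.ne']; rfl
      have key : ∀ c : ℝ, (∀ y ∈ middleCantor β, β * y + c ∈ middleCantor β) →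
          γ ^ j * c ≤ t → t ≤ γ ^ j * c + 1 + γ ^ j * β →
          ∃ x ∈ middleCantor α, ∃ y ∈ middleCantor β,
          (t - (x + γ ^ j * y)) ^ 2 ≤ M * γ ^ j * (1 / 2) ^ (N + 1) := by
        intro c hc hct htc
        obtain ⟨x, hx, y, hy, hxy⟩ := ih (j - m₀) (by omega) (by omega) (t - γ ^ j * c)
          (by linarith) (by rw [e]; linarith)
        refine ⟨x, hx, _, hc y hy, ?_⟩
        calc (t - (x + γ ^ j * (β * y + c))) ^ 2
            = (t - γ ^ j * c - (x + γ ^ (j - m₀) * y)) ^ 2 := by rw [e]; ring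
          _ ≤ M * γ ^ (j - m₀) * (1 / 2) ^ N := hxy
          _ = β * (M * γ ^ j * (1 / 2) ^ N) := by rw [e]; ring
          _ ≤ 1 / 2 * (M * γ ^ j * (1 / 2) ^ N) := mul_le_mul_of_nonneg_right hβ.le hP.le
          _ = _ := by ring
      rcases le_total t (1 + γ ^ j * β) with h | h
      · exact key 0 (fun x hx => by simpa using middleCantor_left hβ0 hβ hx) (by linarith)
          (by linarith)
      · exact key (1 - β) (fun x hx => middleCantor_right hβ0 hβ hx) (by linarith) (by linarith)

lemma log_div_log_le_iff {γ r : ℝ} (hγ : 1 < γ) (hr : 0 < r) (n : ℤ) :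
    Real.log r / Real.log γ ≤ n ↔ r ≤ γ ^ n := by
  rw [div_le_iff₀ (Real.log_pos hγ), ← Real.log_zpow,
    Real.log_le_log_iff hr (zpow_pos (by linarith) n)]

theorem stmt13 (γ : ℝ) (hγ : 1 < γ) (n₀ m₀ : ℕ) (hn₀ : 0 < n₀) (hm₀ : 0 < m₀)
    (hcop : Nat.Coprime n₀ m₀) (α β : ℝ)
    (hαdef : α = γ ^ (-(n₀ : ℤ))) (hβdef : β = γ ^ (-(m₀ : ℤ)))
    (hα0 : 0 < α) (hα : α < 1 / 2) (hβ0 : 0 < β) (hβ : β < 1 / 2)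
    (hτ : (α / (1 - 2 * α)) * (β / (1 - 2 * β)) < 1) :
    sumSet α β = Set.Icc 0 2 ↔
      ∃ n : ℤ, -(m₀ : ℤ) + 1 ≤ n ∧ n ≤ (n₀ : ℤ) ∧
        Real.log ((1 - 2 * β) / α) / Real.log γ ≤ (n : ℝ) ∧
        (n : ℝ) ≤ 1 - Real.log ((1 - 2 * α) / β) / Real.log γ := by
  have hγ0 : 0 < γ := by linarith
  have hα' : 0 < 1 - 2 * α := by linarith
  have hβ' : 0 < 1 - 2 * β := by linarith
  have hlog1 : ∀ n : ℤ, Real.log ((1 - 2 * β) / α) / Real.log γ ≤ (n : ℝ) ↔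
      γ ^ (-n) * (1 - 2 * β) ≤ α := fun n => by
    rw [log_div_log_le_iff hγ (by positivity), div_le_iff₀ hα0, zpow_neg,
      inv_mul_le_iff₀ (zpow_pos hγ0 n)]
  have hlog2 : ∀ n : ℤ, (n : ℝ) ≤ 1 - Real.log ((1 - 2 * α) / β) / Real.log γ ↔
      1 - 2 * α ≤ γ ^ (1 - n) * β := fun n => by
    rw [le_sub_comm, ← div_le_iff₀ hβ0, ← log_div_log_le_iff hγ (by positivity)]
    push_cast
    rfl
  simp only [hlog1, hlog2]
  constructor
  · intro hfull
    have hdich : ∀ j : ℤ, γ ^ j * (1 - 2 * β) ≤ α ∨ 1 - 2 * α ≤ γ ^ j * β := by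
      intro j
      obtain ⟨k, l, hj⟩ := exists_nat_combination hn₀ hm₀ hcop j
      have e : γ ^ j * α ^ k = β ^ l := by
        rw [hαdef, hβdef, ← zpow_natCast, ← zpow_natCast, ← zpow_mul, ← zpow_mul,
          ← zpow_add₀ hγ0.ne', hj]
        congr 1
        ring
      have hk : 0 < α ^ k := by positivity
      rcases no_double_gap hα0 hα hβ0 hβ hfull k l with h | h
      · right
        rw [pow_succ, ← e] at h
        refine le_of_mul_le_mul_left ?_ hk
        linarith
      · left
        rw [pow_succ, ← e] at h
        refine le_of_mul_le_mul_left ?_ hk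
        linarith
    obtain ⟨j, hj1, hj2⟩ := exists_mem_Ico_zpow (x := α / (1 - 2 * β)) (by positivity) hγ
    rw [le_div_iff₀ hβ'] at hj1
    rw [div_lt_iff₀ hβ'] at hj2
    have hτ' : α * β < (1 - 2 * α) * (1 - 2 * β) := by
      rwa [div_mul_div_comm, div_lt_one (by positivity)] at hτ
    refine ⟨-j, ?_, ?_, by simpa using hj1, ?_⟩
    · have h : γ ^ j < γ ^ (m₀ : ℤ) := by
        have hb : γ ^ (m₀ : ℤ) * β = 1 := by
          rw [hβdef, ← zpow_add₀ hγ0.ne']; simp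
        have hj0 : 0 < γ ^ j := zpow_pos hγ0 j
        -- `γ ^ j * β * (1 - 2β) ≤ αβ < (1 - 2α)(1 - 2β)`
        have h3 : γ ^ j * β * (1 - 2 * β) < (1 - 2 * α) * (1 - 2 * β) := by nlinarith
        have h4 := lt_of_mul_lt_mul_right h3 hβ'.le
        refine lt_of_mul_lt_mul_right ?_ hβ0.le
        linarith
      have := (zpow_lt_zpow_iff_right₀ hγ).1 h
      omega
    · have h : γ ^ (-(n₀ : ℤ)) < γ ^ (j + 1) := by
        rw [← hαdef]
        have : 0 < γ ^ (j + 1) := zpow_pos hγ0 _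
        nlinarith
      have := (zpow_lt_zpow_iff_right₀ hγ).1 h
      omega
    · have e : 1 - -j = j + 1 := by ring
      rw [e]
      exact (hdich (j + 1)).resolve_left (not_le.2 hj2)
  · rintro ⟨n, hn1, hn2, h1, h2⟩
    refine (sumSet_subset hα0 hα hβ0 hβ).antisymm fun t ht => ?_
    rw [← (isClosed_sumSet hα0 hα hβ0 hβ).closure_eq, Metric.mem_closure_iff]
    intro δ hδ
    have hM : 0 < (1 + 1 / (1 - 2 * β)) ^ 2 / (1 - 2 * α) := by positivity
    obtain ⟨N, hN⟩ := exists_pow_lt_of_lt_one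
      (show 0 < δ ^ 2 / ((1 + 1 / (1 - 2 * β)) ^ 2 / (1 - 2 * α)) by positivity)
      (show (1 / 2 : ℝ) < 1 by norm_num)
    rw [lt_div_iff₀ hM] at hN
    obtain ⟨x, hx, y, hy, hxy⟩ := exists_approx hγ hαdef hβdef hα0 hα hβ0 hβ h1 h2 N 0
      (by omega) (by omega) t ht.1 (by have := ht.2; simp only [zpow_zero]; linarith)
    refine ⟨x + y, ⟨x, hx, y, hy, rfl⟩, ?_⟩
    rw [zpow_zero, one_mul, mul_one] at hxy
    rw [Real.dist_eq]
    refine abs_lt_of_sq_lt_sq ?_ hδ.le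
    linarith
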